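/- Let (Y,d) be a metric space with basepoint y₀, 0 < β ≤ 1, equip ℝⁿ × Y with the metric D((x₁,y₁),(x₂,y₂)) = max{|x₁−x₂|^β, d(y₁,y₂)}, and let E be the space of maps h: Y → ℝⁿ Lipschitz as maps (Y,d) → (ℝⁿ,|·|^β) with h(y₀) = 0. Let Γ be a group of bijections of ℝⁿ × Y, each of the form γ(x,y) = (a_γ A_γ(x + x_γ + h_γ(y)), σ_γ(y)) with a_γ > 0, A_γ ∈ O(n), x_γ ∈ ℝⁿ, h_γ ∈ E, and σ_γ a similarity of Y with similarity constant a_γ^β. If the cocycle b: Γ* → E, b_γ = h_γ, is a coboundary, i.e., there is h₀ ∈ E with h_γ = h₀ − π_γ h₀ for all γ ∈ Γ (where (π_γ h)(y) = a_γ^{-1} A_γ^{-1} h(σ_γ(y)) − a_γ^{-1} A_γ^{-1} h(σ_γ(y₀))), then the map H₀: ℝⁿ × Y → ℝⁿ × Y, H₀(x,y) = (x + h₀(y), y), is a biLipschitz bijection and every element of H₀ Γ H₀^{-1} is a similarity of (ℝⁿ × Y, D); explicitly, H₀ ∘ γ ∘ H₀^{-1}(x,y) = (a_γ A_γ [x +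 x_γ + a_γ^{-1} A_γ^{-1} h₀(σ_γ(y₀))], σ_γ(y)). -/

import Mathlib

/-- The metric `D((x₁,y₁),(x₂,y₂)) = max{|x₁−x₂|^β, d(y₁,y₂)}` on `ℝⁿ × Y`. -/
noncomputable def prodDist (n : ℕ) {Y : Type*} [MetricSpace Y] (β : ℝ)
    (p q : EuclideanSpace ℝ (Fin n) × Y) : ℝ :=
  max (‖p.1 - q.1‖ ^ β) (dist p.2 q.2)

/-- `h : Y → ℝⁿ` is Lipschitz as a map `(Y,d) → (ℝⁿ,|·|^β)` and vanishes at `y₀`. -/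
def IsHolderZero (n : ℕ) {Y : Type*} [MetricSpace Y] (y₀ : Y) (β : ℝ)
    (h : Y → EuclideanSpace ℝ (Fin n)) : Prop :=
  (∃ L : ℝ, ∀ y₁ y₂ : Y, ‖h y₁ - h y₂‖ ^ β ≤ L * dist y₁ y₂) ∧ h y₀ = 0

/-- The map `(π_γ h)(y) = a⁻¹ A⁻¹ h(σ y) − a⁻¹ A⁻¹ h(σ y₀)`. -/
noncomputable def piMap (n : ℕ) {Y : Type*} (y₀ : Y) (a : ℝ)
    (A : EuclideanSpace ℝ (Fin n) ≃ₗᵢ[ℝ] EuclideanSpace ℝ (Fin n))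
    (σ : Y → Y) (h : Y → EuclideanSpace ℝ (Fin n)) : Y → EuclideanSpace ℝ (Fin n) :=
  fun y => a⁻¹ • A.symm (h (σ y)) - a⁻¹ • A.symm (h (σ y₀))

/-- The shear map `H(x,y) = (x + h₀ y, y)` of `ℝⁿ × Y`. -/
def shear (n : ℕ) {Y : Type*} (h₀ : Y → EuclideanSpace ℝ (Fin n)) :
    EuclideanSpace ℝ (Fin n) × Y → EuclideanSpace ℝ (Fin n) × Y :=
  fun p => (p.1 + h₀ p.2, p.2)

/-!
Conjugating a map `(x, y) ↦ (a A (x + x₀ + h y), σ y)` by the shear along `k` replaces `h` by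
`h - k + a⁻¹ A⁻¹ (k ∘ σ)`. The coboundary equation for `k = h₀` says precisely that this new
function of `y` is constant, so the conjugate is a product of two similarities, of ratio `a` on `ℝⁿ`
and `a ^ β` on `Y`; in `D` both scale distances by `a ^ β`. That the shear is biLipschitz
comes from the subadditivity of `t ↦ t ^ β` for `β ≤ 1`, applied both to `h₀` and to `-h₀`.
-/

theorem norm_add_rpow_le {V : Type*} [SeminormedAddGroup V] {β : ℝ} (hβ0 : 0 ≤ β) (hβ1 : β ≤ 1)
    (u v : V) : ‖u + v‖ ^ β ≤ ‖u‖ ^ β + ‖v‖ ^ β :=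
  calc ‖u + v‖ ^ β
      ≤ (‖u‖ + ‖v‖) ^ β := Real.rpow_le_rpow (norm_nonneg _) (norm_add_le u v) hβ0
    _ ≤ ‖u‖ ^ β + ‖v‖ ^ β := Real.rpow_add_le_add_rpow (norm_nonneg u) (norm_nonneg v) hβ0 hβ1

/-- The distance on `V × Y` that is the maximum of the `β`-snowflake of the norm of `V` and the
distance of `Y`. It generalizes `prodDist` to an arbitrary normed group `V`, and it is a plain
function because `V × Y` already carries the sup distance. -/
noncomputable def snowflakeProdDist {V Y : Type*} [SeminormedAddGroup V] [PseudoMetricSpace Y]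
    (β : ℝ) (p q : V × Y) : ℝ :=
  max (‖p.1 - q.1‖ ^ β) (dist p.2 q.2)

/-- The shear of `V × Y` that translates the fiber over `y` by `h y`, generalizing `shear`. -/
def fiberShear {V Y : Type*} [Add V] (h : Y → V) (p : V × Y) : V × Y :=
  (p.1 + h p.2, p.2)

section FiberShear

theorem fiberShear_zero {V Y : Type*} [AddZeroClass V] : fiberShear (0 : Y → V) = id := by
  ext p <;> simp [fiberShear]

theorem fiberShear_comp_fiberShear {V Y : Type*} [AddSemigroup V] (h k : Y → V) :
    fiberShear h ∘ fiberShear k = fiberShear (k + h) := by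
  ext p <;> simp [fiberShear, add_assoc]

theorem fiberShear_comp_fiberShear_neg {V Y : Type*} [AddGroup V] (h : Y → V) :
    fiberShear h ∘ fiberShear (-h) = id := by
  rw [fiberShear_comp_fiberShear, neg_add_cancel, fiberShear_zero]

theorem fiberShear_neg_comp_fiberShear {V Y : Type*} [AddGroup V] (h : Y → V) :
    fiberShear (-h) ∘ fiberShear h = id := by
  rw [fiberShear_comp_fiberShear, add_neg_cancel, fiberShear_zero]

variable {V Y : Type*} [SeminormedAddCommGroup V] [PseudoMetricSpace Y] {β K : ℝ} {h : Y → V}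

theorem snowflakeProdDist_fiberShear_le (hβ0 : 0 ≤ β) (hβ1 : β ≤ 1)
    (hh : ∀ y₁ y₂, ‖h y₁ - h y₂‖ ^ β ≤ K * dist y₁ y₂) (p q : V × Y) :
    snowflakeProdDist β (fiberShear h p) (fiberShear h q) ≤
      (1 + |K|) * snowflakeProdDist β p q := by
  have fst_le : ‖p.1 - q.1‖ ^ β ≤ snowflakeProdDist β p q := le_max_left _ _
  have snd_le : dist p.2 q.2 ≤ snowflakeProdDist β p q := le_max_right _ _
  refine max_le ?_ ?_
  · calc ‖p.1 + h p.2 - (q.1 + h q.2)‖ ^ β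
        = ‖(p.1 - q.1) + (h p.2 - h q.2)‖ ^ β := by rw [add_sub_add_comm]
      _ ≤ ‖p.1 - q.1‖ ^ β + ‖h p.2 - h q.2‖ ^ β := norm_add_rpow_le hβ0 hβ1 _ _
      _ ≤ ‖p.1 - q.1‖ ^ β + |K| * dist p.2 q.2 := by
          gcongr
          exact (hh _ _).trans (by gcongr; exact le_abs_self K)
      _ ≤ snowflakeProdDist β p q + |K| * snowflakeProdDist β p q := by gcongr
      _ = (1 + |K|) * snowflakeProdDist β p q := by ring
  · exact snd_le.trans <|
      le_mul_of_one_le_left (dist_nonneg.trans snd_le) (le_add_of_nonneg_right (abs_nonneg K))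

theorem snowflakeProdDist_le_mul_fiberShear (hβ0 : 0 ≤ β) (hβ1 : β ≤ 1)
    (hh : ∀ y₁ y₂, ‖h y₁ - h y₂‖ ^ β ≤ K * dist y₁ y₂) (p q : V × Y) :
    snowflakeProdDist β p q ≤
      (1 + |K|) * snowflakeProdDist β (fiberShear h p) (fiberShear h q) := by
  have hh_neg (y₁ y₂ : Y) : ‖(-h) y₁ - (-h) y₂‖ ^ β ≤ K * dist y₁ y₂ := by
    rw [Pi.neg_apply, Pi.neg_apply, neg_sub_neg, norm_sub_rev]
    exact hh y₁ y₂
  have neg_apply (r : V × Y) : fiberShear (-h) (fiberShear h r) = r :=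
    congrFun (fiberShear_neg_comp_fiberShear h) r
  simpa only [neg_apply] using
    snowflakeProdDist_fiberShear_le hβ0 hβ1 hh_neg (fiberShear h p) (fiberShear h q)

theorem exists_biLipschitz_fiberShear (hβ0 : 0 ≤ β) (hβ1 : β ≤ 1)
    (hh : ∃ K, ∀ y₁ y₂, ‖h y₁ - h y₂‖ ^ β ≤ K * dist y₁ y₂) :
    ∃ L : ℝ, 1 ≤ L ∧ ∀ p q : V × Y,
      snowflakeProdDist β p q / L ≤ snowflakeProdDist β (fiberShear h p) (fiberShear h q) ∧
        snowflakeProdDist β (fiberShear h p) (fiberShear h q) ≤ L * snowflakeProdDist β p q := by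
  obtain ⟨K, hK⟩ := hh
  exact ⟨1 + |K|, le_add_of_nonneg_right (abs_nonneg K), fun p q =>
    ⟨(div_le_iff₀' (by positivity)).2 (snowflakeProdDist_le_mul_fiberShear hβ0 hβ1 hK p q),
      snowflakeProdDist_fiberShear_le hβ0 hβ1 hK p q⟩⟩

end FiberShear

/-- The map `(v, y) ↦ (a A (v + x + h y), σ y)` of `V × Y`, which acts on each fiber of the
projection to `Y` as a similarity of `V` of ratio `|a|`: the form of the elements of `Γ`. -/
def fiberSimilarity {V Y : Type*} [SeminormedAddCommGroup V] [NormedSpace ℝ V] (a : ℝ)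
    (A : V ≃ₗᵢ[ℝ] V) (x : V) (h : Y → V) (σ : Y → Y) (p : V × Y) : V × Y :=
  (a • A (p.1 + x + h p.2), σ p.2)

/-- The action `π_γ` on functions `Y → V` of the map with linear part `a A` and base map `σ`,
normalized to vanish at the basepoint `y₀`. It generalizes `piMap` to an arbitrary `V`. -/
noncomputable def basedPullback {V Y : Type*} [SeminormedAddCommGroup V] [NormedSpace ℝ V] (y₀ : Y)
    (a : ℝ) (A : V ≃ₗᵢ[ℝ] V) (σ : Y → Y) (h : Y → V) (y : Y) : V :=
  a⁻¹ • A.symm (h (σ y)) - a⁻¹ • A.symm (h (σ y₀))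

section FiberSimilarity

variable {V Y : Type*} [SeminormedAddCommGroup V] [NormedSpace ℝ V] {a : ℝ} {σ : Y → Y}

theorem fiberShear_fiberSimilarity_fiberShear_neg (ha : a ≠ 0) (A : V ≃ₗᵢ[ℝ] V) (x : V)
    (h k : Y → V) (p : V × Y) :
    fiberShear k (fiberSimilarity a A x h σ (fiberShear (-k) p)) =
      fiberSimilarity a A x (fun y => h y - k y + a⁻¹ • A.symm (k (σ y))) σ p := by
  have absorb (u w : V) : a • A u + w = a • A (u + a⁻¹ • A.symm w) := by simp [ha]
  refine Prod.ext ?_ rfl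
  simp only [fiberShear, fiberSimilarity, Pi.neg_apply, absorb]
  congr 2
  abel

theorem fiberShear_fiberSimilarity_fiberShear_neg_of_coboundary (y₀ : Y) (ha : a ≠ 0)
    (A : V ≃ₗᵢ[ℝ] V) (x : V) {h k : Y → V} (hcob : h = k - basedPullback y₀ a A σ k) (p : V × Y) :
    fiberShear k (fiberSimilarity a A x h σ (fiberShear (-k) p)) =
      fiberSimilarity a A x (fun _ => a⁻¹ • A.symm (k (σ y₀))) σ p := by
  have is_const (y : Y) :
      h y - k y + a⁻¹ • A.symm (k (σ y)) = a⁻¹ • A.symm (k (σ y₀)) := by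
    rw [hcob, Pi.sub_apply, basedPullback]
    abel
  rw [fiberShear_fiberSimilarity_fiberShear_neg ha, funext is_const]

theorem snowflakeProdDist_fiberSimilarity_const [PseudoMetricSpace Y] {β : ℝ} (ha : 0 ≤ a)
    (hσ : ∀ y y', dist (σ y) (σ y') = a ^ β * dist y y') (A : V ≃ₗᵢ[ℝ] V) (x c : V) (p q : V × Y) :
    snowflakeProdDist β (fiberSimilarity a A x (fun _ => c) σ p)
        (fiberSimilarity a A x (fun _ => c) σ q) = a ^ β * snowflakeProdDist β p q := by
  have fst_norm : ‖a • A (p.1 + x + c) - a • A (q.1 + x + c)‖ = a * ‖p.1 - q.1‖ := by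
    rw [← smul_sub, ← map_sub, add_sub_add_right_eq_sub, add_sub_add_right_eq_sub, norm_smul,
      A.norm_map, Real.norm_of_nonneg ha]
  simp only [snowflakeProdDist, fiberSimilarity]
  rw [fst_norm, Real.mul_rpow ha (norm_nonneg _), hσ, mul_max_of_nonneg _ _ (by positivity)]

end FiberSimilarity

theorem coboundary_conjugates_to_similarities_general {V Y ι : Type*} [SeminormedAddCommGroup V]
    [NormedSpace ℝ V] [PseudoMetricSpace Y] (y₀ : Y) {β : ℝ} (hβ0 : 0 < β) (hβ1 : β ≤ 1)
    (F : ι → V × Y → V × Y) {a : ι → ℝ} (ha : ∀ i, 0 < a i) (A : ι → V ≃ₗᵢ[ℝ] V) (x : ι → V)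
    (h : ι → Y → V) (σ : ι → Y → Y) (hσ : ∀ i y y', dist (σ i y) (σ i y') = a i ^ β * dist y y')
    (hF : ∀ i p, F i p = fiberSimilarity (a i) (A i) (x i) (h i) (σ i) p)
    {h₀ : Y → V} (hh₀ : ∃ K, ∀ y₁ y₂, ‖h₀ y₁ - h₀ y₂‖ ^ β ≤ K * dist y₁ y₂)
    (hcob : ∀ i, h i = h₀ - basedPullback y₀ (a i) (A i) (σ i) h₀) :
    (fiberShear h₀ ∘ fiberShear (-h₀) = id ∧ fiberShear (-h₀) ∘ fiberShear h₀ = id) ∧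
    (∃ L : ℝ, 1 ≤ L ∧ ∀ p q : V × Y,
      snowflakeProdDist β p q / L ≤ snowflakeProdDist β (fiberShear h₀ p) (fiberShear h₀ q) ∧
        snowflakeProdDist β (fiberShear h₀ p) (fiberShear h₀ q) ≤ L * snowflakeProdDist β p q) ∧
    (∀ i p, fiberShear h₀ (F i (fiberShear (-h₀) p)) =
      fiberSimilarity (a i) (A i) (x i) (fun _ => (a i)⁻¹ • (A i).symm (h₀ (σ i y₀))) (σ i) p) ∧
    (∀ i, ∃ c : ℝ, 0 < c ∧ ∀ p q : V × Y,
      snowflakeProdDist β (fiberShear h₀ (F i (fiberShear (-h₀) p)))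
        (fiberShear h₀ (F i (fiberShear (-h₀) q))) = c * snowflakeProdDist β p q) := by
  have conj_eq (i : ι) (p : V × Y) : fiberShear h₀ (F i (fiberShear (-h₀) p)) =
      fiberSimilarity (a i) (A i) (x i) (fun _ => (a i)⁻¹ • (A i).symm (h₀ (σ i y₀))) (σ i) p := by
    rw [hF]
    exact fiberShear_fiberSimilarity_fiberShear_neg_of_coboundary y₀ (ha i).ne' (A i) (x i)
      (hcob i) p
  refine ⟨⟨fiberShear_comp_fiberShear_neg h₀, fiberShear_neg_comp_fiberShear h₀⟩,
    exists_biLipschitz_fiberShear hβ0.le hβ1 hh₀, conj_eq,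
    fun i => ⟨a i ^ β, Real.rpow_pos_of_pos (ha i) β, fun p q => ?_⟩⟩
  rw [conj_eq, conj_eq]
  exact snowflakeProdDist_fiberSimilarity_const (ha i).le (hσ i) (A i) (x i) _ p q

/-- Lemma 3.3: If the cocycle `b_γ = h_γ` is a coboundary,
`h_γ = h₀ − π_γ h₀` with `h₀ ∈ E`, then `H₀(x,y) = (x + h₀ y, y)` is a biLipschitz bijection
of `(ℝⁿ × Y, D)` and every element of `H₀ Γ H₀⁻¹` is a similarity; explicitly
`H₀ ∘ γ ∘ H₀⁻¹ (x,y) = (a_γ A_γ[x + x_γ + a_γ⁻¹ A_γ⁻¹ h₀(σ_γ y₀)], σ_γ y)`. -/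
theorem coboundary_conjugates_to_similarities (n : ℕ)
    {Y : Type*} [MetricSpace Y] (y₀ : Y) (β : ℝ) (hβ0 : 0 < β) (hβ1 : β ≤ 1)
    {Γ : Type*} [Group Γ]
    (ρ : Γ →* Equiv.Perm (EuclideanSpace ℝ (Fin n) × Y))
    (a : Γ → ℝ) (ha : ∀ γ : Γ, 0 < a γ)
    (A : Γ → EuclideanSpace ℝ (Fin n) ≃ₗᵢ[ℝ] EuclideanSpace ℝ (Fin n))
    (x : Γ → EuclideanSpace ℝ (Fin n))
    (h : Γ → Y → EuclideanSpace ℝ (Fin n))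
    (hhE : ∀ γ : Γ, IsHolderZero n y₀ β (h γ))
    (σ : Γ → Y → Y)
    (hσ : ∀ γ : Γ, Function.Bijective (σ γ) ∧
      ∀ y y' : Y, dist (σ γ y) (σ γ y') = a γ ^ β * dist y y')
    (hform : ∀ (γ : Γ) (p : EuclideanSpace ℝ (Fin n) × Y),
      ρ γ p = (a γ • A γ (p.1 + x γ + h γ p.2), σ γ p.2))
    (h₀ : Y → EuclideanSpace ℝ (Fin n)) (hh₀ : IsHolderZero n y₀ β h₀)
    (hcob : ∀ γ : Γ, h γ = h₀ - piMap n y₀ (a γ) (A γ) (σ γ) h₀) :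
    (shear n h₀ ∘ shear n (-h₀) = id ∧ shear n (-h₀) ∘ shear n h₀ = id) ∧
    (∃ L : ℝ, 1 ≤ L ∧ ∀ p q : EuclideanSpace ℝ (Fin n) × Y,
      prodDist n β p q / L ≤ prodDist n β (shear n h₀ p) (shear n h₀ q) ∧
        prodDist n β (shear n h₀ p) (shear n h₀ q) ≤ L * prodDist n β p q) ∧
    (∀ (γ : Γ) (p : EuclideanSpace ℝ (Fin n) × Y),
      shear n h₀ (ρ γ (shear n (-h₀) p)) =
        (a γ • A γ (p.1 + x γ + (a γ)⁻¹ • (A γ).symm (h₀ (σ γ y₀))), σ γ p.2)) ∧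
    (∀ γ : Γ, ∃ c : ℝ, 0 < c ∧ ∀ p q : EuclideanSpace ℝ (Fin n) × Y,
      prodDist n β (shear n h₀ (ρ γ (shear n (-h₀) p)))
          (shear n h₀ (ρ γ (shear n (-h₀) q))) = c * prodDist n β p q) := by
  exact coboundary_conjugates_to_similarities_general y₀ hβ0 hβ1 (fun γ => ρ γ) ha A x h σ
    (fun γ => (hσ γ).2) hform hh₀.1 hcob
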